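/- arXiv:1609.00135 — 2 statements merged into one kernel-verified Lean document; each statement's English description precedes it below -/
import Mathlib

section
/- Let ν ∈ [α, (1+α)/2] and let x be a solution of the heavy ball equation with vanishing damping and source term g satisfying ∫₀^∞ (1+t)^ν ‖g(t)‖ dt < ∞. Then the energy function W(t) = ½‖x'(t)‖² + Φ(x(t)) − Φ* satisfies W(t) = o(1/t^{2ν}) as t → +∞, i.e. t^{2ν} W(t) → 0 as t → +∞. -/
open MeasureTheory Filter Real Set RealInnerProductSpace

lemma hb_growth (T C : ℝ) (hT : 1 ≤ T) (hC : 0 ≤ C) (E F dE dF φ : ℝ → ℝ)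
    (hE : ∀ t, T ≤ t → HasDerivAt E (dE t) t)
    (hF : ∀ t, T ≤ t → HasDerivAt F (dF t) t)
    (hF0 : ∀ t, T ≤ t → 0 ≤ F t)
    (hFE : ∀ t, T ≤ t → F t ≤ 2 * E t)
    (hφ0 : ∀ t, T ≤ t → 0 ≤ φ t)
    (hφ : IntegrableOn φ (Ici T))
    (hdE : ∀ t, T ≤ t → dE t ≤ - (F t / (1 + t)) + C * (φ t * (1 + E t)))
    (hdF : ∀ t, T ≤ t → dF t ≤ C * (F t / (1 + t)) + C * (φ t * (1 + F t))) :
    Tendsto F atTop (nhds 0) := by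
  have hE0 : ∀ t, T ≤ t → 0 ≤ E t := fun t ht => by linarith [hF0 t ht, hFE t ht]
  -- generic comparison
  have cmp : ∀ (f f' ψ : ℝ → ℝ), (∀ t, T ≤ t → HasDerivAt f (f' t) t) →
      IntegrableOn ψ (Ici T) → (∀ t, T ≤ t → f' t ≤ ψ t) →
      ∀ a b, T ≤ a → a ≤ b → f b - f a ≤ ∫ y in a..b, ψ y := by
    intro f f' ψ hf hψ hle a b ha hab
    apply intervalIntegral.sub_le_integral_of_hasDeriv_right_of_le (g' := f') hab
    · intro t ht
      exact (hf t (ha.trans ht.1)).continuousAt.continuousWithinAt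
    · intro t ht
      exact (hf t (ha.trans ht.1.le)).hasDerivWithinAt
    · exact hψ.mono_set (fun t ht => ha.trans ht.1)
    · intro t ht
      exact hle t (ha.trans ht.1.le)
  set I := ∫ y in Ioi T, φ y with hI
  have hIle : ∀ b, T ≤ b → ∫ y in T..b, φ y ≤ I := by
    intro b hb
    rw [intervalIntegral.integral_of_le hb]
    apply setIntegral_mono_set (hφ.mono_set Ioi_subset_Ici_self)
    · exact (ae_restrict_mem measurableSet_Ioi).mono (fun t ht => hφ0 t (le_of_lt ht))
    · exact (Ioc_subset_Ioi_self).eventuallyLE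
  -- step 1
  obtain ⟨M, hM⟩ : ∃ M, ∀ t, T ≤ t → E t ≤ M := by
    refine ⟨Real.exp (Real.log (1 + E T) + C * I), fun t ht => ?_⟩
    have h := cmp (fun t => Real.log (1 + E t)) (fun t => dE t / (1 + E t)) (fun t => C * φ t)
      (fun t ht => by
        have := ((hE t ht).const_add 1).log (by linarith [hE0 t ht])
        exact this) (hφ.const_mul C)
      (fun t ht => by
        have h1 : 0 < 1 + E t := by linarith [hE0 t ht]
        rw [div_le_iff₀ h1]
        have h2 : 0 ≤ F t / (1 + t) := div_nonneg (hF0 t ht) (by linarith)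
        linarith [hdE t ht]) T t le_rfl ht
    rw [intervalIntegral.integral_const_mul] at h
    have h3 := mul_le_mul_of_nonneg_left (hIle t ht) hC
    have h4 : Real.log (1 + E t) ≤ Real.log (1 + E T) + C * I := by
      linarith
    have h1 : 0 < 1 + E t := by linarith [hE0 t ht]
    rw [Real.log_le_iff_le_exp h1] at h4
    linarith
  have hM0 : 0 ≤ M := (hE0 T le_rfl).trans (hM T le_rfl)
  have hcont : ContinuousOn (fun t => F t / (1 + t)) (Ici T) := by
    apply ContinuousOn.div
    · intro t ht
      exact (hF t ht).continuousAt.continuousWithinAt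
    · fun_prop
    · intro t ht
      have : T ≤ t := ht
      linarith
  have hq : IntegrableOn (fun t => F t / (1 + t)) (Ioi T) := by
    apply integrableOn_Ioi_of_intervalIntegral_norm_bounded (l := atTop) (b := id)
      (E T + C * (1 + M) * I) T
    · intro b
      exact ((hcont.mono (Icc_subset_Ici_self)).integrableOn_Icc).mono_set Ioc_subset_Icc_self
    · exact tendsto_id
    · filter_upwards [eventually_ge_atTop T] with b hb
      simp only [id]
      have e1 : ∫ t in T..b, ‖F t / (1 + t)‖ = ∫ t in T..b, F t / (1 + t) := by
        apply intervalIntegral.integral_congr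
        intro t ht
        rw [uIcc_of_le hb] at ht
        exact Real.norm_of_nonneg (div_nonneg (hF0 t ht.1) (by linarith [ht.1]))
      rw [e1]
      have i1 : IntegrableOn (fun t => F t / (1 + t)) (Icc T b) :=
        (hcont.mono (Icc_subset_Ici_self)).integrableOn_Icc
      have i2 : IntegrableOn (fun t => C * (1 + M) * φ t) (Icc T b) :=
        (hφ.mono_set Icc_subset_Ici_self).const_mul _
      have h : E b - E T ≤ ∫ t in T..b, (C * (1 + M) * φ t - F t / (1 + t)) := by
        apply intervalIntegral.sub_le_integral_of_hasDeriv_right_of_le (g' := dE) hb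
        · intro t ht
          exact (hE t ht.1).continuousAt.continuousWithinAt
        · intro t ht
          exact (hE t ht.1.le).hasDerivWithinAt
        · exact i2.sub i1
        · intro t ht
          have h1 := hdE t ht.1.le
          have h2 : C * (φ t * (1 + E t)) ≤ C * (φ t * (1 + M)) := by
            gcongr
            · exact hφ0 t ht.1.le
            · exact hM t ht.1.le
          linarith
      rw [intervalIntegral.integral_sub
        ((intervalIntegrable_iff_integrableOn_Icc_of_le hb).2 i2)
        ((intervalIntegrable_iff_integrableOn_Icc_of_le hb).2 i1),
        intervalIntegral.integral_const_mul] at h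
      have h3 : C * (1 + M) * ∫ y in T..b, φ y ≤ C * (1 + M) * I :=
        mul_le_mul_of_nonneg_left (hIle b hb) (by positivity)
      linarith [hE0 b hb]
  -- step 3
  set ψ : ℝ → ℝ := fun t => C * (F t / (1 + t)) + C * (1 + 2 * M) * φ t with hψdef
  have hψ' : IntegrableOn ψ (Ioi T) :=
    (hq.const_mul C).add ((hφ.mono_set Ioi_subset_Ici_self).const_mul _)
  have hψ : IntegrableOn ψ (Ici T) := (integrableOn_Ici_iff_integrableOn_Ioi).2 hψ'
  have hFψ := cmp F dF ψ hF hψ (fun t ht => by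
    have h1 := hdF t ht
    have h2 : C * (φ t * (1 + F t)) ≤ C * (φ t * (1 + 2 * M)) := by
      gcongr
      · exact hφ0 t ht
      · linarith [hFE t ht, hM t ht]
    simp only [hψdef]
    linarith)
  have hlim := intervalIntegral_tendsto_integral_Ioi T hψ' tendsto_id
  rw [Metric.tendsto_atTop]
  intro ε hε
  rw [Metric.tendsto_atTop] at hlim
  obtain ⟨N, hN⟩ := hlim (ε / 4) (by positivity)
  obtain ⟨a, haN, haF⟩ : ∃ a, max T N ≤ a ∧ F a < ε / 2 := by
    by_contra! hcon
    have hT' : T ≤ max T N := le_max_left _ _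
    apply not_integrableOn_Ioi_inv (a := max T N)
    have hq' : IntegrableOn (fun t => (4 / ε) * (F t / (1 + t))) (Ioi (max T N)) :=
      (hq.mono_set (Ioi_subset_Ioi hT')).const_mul _
    refine Integrable.mono' hq' (by fun_prop) ?_
    refine (ae_restrict_mem measurableSet_Ioi).mono (fun t ht => ?_)
    have ht1 : max T N < t := ht
    have ht2 : 1 < t := by linarith
    have h1 := hcon t ht1.le
    rw [Real.norm_of_nonneg (by positivity), div_mul_div_comm, inv_eq_one_div,
      div_le_div_iff₀ (by positivity) (by positivity)]
    nlinarith [mul_le_mul_of_nonneg_right h1 (by linarith : 0 ≤ t)]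
  refine ⟨a, fun b hb => ?_⟩
  have haT : T ≤ a := (le_max_left _ _).trans haN
  have haN' : N ≤ a := (le_max_right _ _).trans haN
  have h1 := hFψ a b haT hb
  have ii : ∀ u, T ≤ u → IntervalIntegrable ψ volume T u := fun u hu =>
    (intervalIntegrable_iff_integrableOn_Icc_of_le hu).2 (hψ.mono_set Icc_subset_Ici_self)
  rw [← intervalIntegral.integral_interval_sub_left (ii b (haT.trans hb)) (ii a haT)] at h1
  have h2 := hN a haN'
  have h3 := hN b (haN'.trans hb)
  rw [Real.dist_eq, abs_lt] at h2 h3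
  simp only [id] at h2 h3
  rw [Real.dist_eq, sub_zero, abs_of_nonneg (hF0 b (haT.trans hb))]
  linarith

lemma hb_alg1 (c β K A B n ρ q P : ℝ) (hK : 1 ≤ K) 
    (hP : 0 ≤ P) (hq : |q| ≤ n * ρ)
    (hA2 : |β - 1| / 2 + K ≤ c * A / 4) :
    B ^ 2 * ((n ^ 2 / 2 + P) / 2 + K * c * A * ρ ^ 2 / 4) ≤
    B ^ 2 * (n ^ 2 / 2 + P + K * q + K * (c * A - (β - 1)) * ρ ^ 2 / 2) := by
  apply mul_le_mul_of_nonneg_left _ (sq_nonneg B)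
  have h1 : K * (-(n * ρ)) ≤ K * q := by
    apply mul_le_mul_of_nonneg_left _ (by linarith)
    linarith [neg_abs_le q]
  have h2 : K * ρ ^ 2 * (|β - 1| / 2 + K) ≤ K * ρ ^ 2 * (c * A / 4) :=
    mul_le_mul_of_nonneg_left hA2 (by positivity)
  have h3 : K * ρ ^ 2 * (β - 1) ≤ K * ρ ^ 2 * |β - 1| :=
    mul_le_mul_of_nonneg_left (le_abs_self _) (by positivity)
  nlinarith [sq_nonneg (n / 2 - K * ρ)]

lemma hb_alg2 (c α β K s A B n ρ P G gp gr E : ℝ) (hc : 0 < c) (hK : K = β + 1) (hβ : 0 ≤ β)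
    (hs : 0 < s) (hA : 1 ≤ A) (hB : 0 ≤ B) (hG : 0 ≤ G) (hn : 0 ≤ n) (hρ : 0 ≤ ρ)
    (hβα : β ≤ 1 + α) (hP : 0 ≤ P)
    (hgp : gp ≤ G * n) (hgr : gr ≤ G * ρ) (hA3 : 3 * K / 2 ≤ c * A)
    (hE : B ^ 2 * ((n ^ 2 / 2 + P) / 2 + K * c * A * ρ ^ 2 / 4) ≤ E) :
    B ^ 2 / s * ((β - K) * (n ^ 2 / 2 + P) + (3 * K / 2 - c * A) * n ^ 2 + s * gp + K * (s * gr)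
      + K / 2 * (c * (β - 1 - α) * A - (β - 1) * (β - 2)) * ρ ^ 2) ≤
    -(B ^ 2 * (n ^ 2 / 2 + P) / s) +
      (5 + K + 4 / c + 2 * |(β - 1) * (β - 2)| / c) * ((B * G + 1 / (A * s)) * (1 + E)) := by
  have hK0 : 1 ≤ K := by linarith
  set Q := |(β - 1) * (β - 2)| with hQ
  have hQ0 : 0 ≤ Q := abs_nonneg _
  have hw : 0 ≤ B ^ 2 * (K * c * A * ρ ^ 2 / 4) := by positivity
  have hw2 : 0 ≤ B ^ 2 * P := by positivity
  have e1 : B ^ 2 * n ^ 2 ≤ 4 * E := by nlinarith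
  have e2 : B ^ 2 * (K * c * A * ρ ^ 2 / 4) ≤ E := by nlinarith [mul_nonneg (sq_nonneg B) (sq_nonneg n)]
  have hE0 : 0 ≤ E := hw.trans e2
  have e3 : K * (B ^ 2 * ρ ^ 2) * A ≤ 4 / c * E := by
    rw [div_mul_eq_mul_div, le_div_iff₀ hc]; nlinarith
  have e4 : K * (B ^ 2 * ρ ^ 2) ≤ 4 / c * E := by
    refine le_trans ?_ e3
    exact le_mul_of_one_le_right (by positivity) hA
  have hBG : 0 ≤ B * G := by positivity
  -- split
  have t1 : B ^ 2 * gp ≤ (B * G) * (1 + 4 * E) := by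
    calc B ^ 2 * gp ≤ B ^ 2 * (G * n) := by gcongr
      _ = (B * G) * (B * n) := by ring
      _ ≤ (B * G) * (1 + 4 * E) := by
        gcongr
        nlinarith [sq_nonneg (B * n - 1)]
  have t2 : K * (B ^ 2 * gr) ≤ (B * G) * (K + 4 / c * E) := by
    calc K * (B ^ 2 * gr) ≤ K * (B ^ 2 * (G * ρ)) := by gcongr
      _ = (B * G) * (K * (B * ρ)) := by ring
      _ ≤ (B * G) * (K * (1 + B ^ 2 * ρ ^ 2)) := by
        gcongr
        nlinarith [sq_nonneg (B * ρ - 1)]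
      _ ≤ _ := by
        gcongr
        linarith
  have t3 : B ^ 2 / s * (K / 2 * (c * (β - 1 - α) * A - (β - 1) * (β - 2)) * ρ ^ 2)
      ≤ 1 / (A * s) * (2 * Q / c * E) := by
    have a1 : c * (β - 1 - α) * A ≤ 0 := by
      have : 0 ≤ c * A * (1 + α - β) := mul_nonneg (by positivity) (by linarith)
      nlinarith
    have a2 : c * (β - 1 - α) * A - (β - 1) * (β - 2) ≤ Q := by
      linarith [neg_abs_le ((β - 1) * (β - 2))]
    calc _ ≤ B ^ 2 / s * (K / 2 * Q * ρ ^ 2) := by gcongr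
      _ = 1 / (A * s) * (Q / 2 * (K * (B ^ 2 * ρ ^ 2) * A)) := by field_simp
      _ ≤ 1 / (A * s) * (Q / 2 * (4 / c * E)) := by gcongr
      _ = _ := by ring
  have t4 : B ^ 2 / s * ((3 * K / 2 - c * A) * n ^ 2) ≤ 0 := by
    apply mul_nonpos_of_nonneg_of_nonpos (by positivity)
    apply mul_nonpos_of_nonpos_of_nonneg (by linarith) (by positivity)
  have key : B ^ 2 / s * ((β - K) * (n ^ 2 / 2 + P) + (3 * K / 2 - c * A) * n ^ 2 + s * gp
      + K * (s * gr) + K / 2 * (c * (β - 1 - α) * A - (β - 1) * (β - 2)) * ρ ^ 2)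
      = -(B ^ 2 * (n ^ 2 / 2 + P) / s) + B ^ 2 / s * ((3 * K / 2 - c * A) * n ^ 2) + B ^ 2 * gp
        + K * (B ^ 2 * gr)
        + B ^ 2 / s * (K / 2 * (c * (β - 1 - α) * A - (β - 1) * (β - 2)) * ρ ^ 2) := by
    have : β - K = -1 := by linarith
    rw [this]
    field_simp
  rw [key]
  have hc4 : 0 ≤ 4 / c := by positivity
  have hQc : 0 ≤ 2 * Q / c := by positivity
  have hD0 : 0 ≤ 1 / (A * s) := by positivity
  clear_value Q
  generalize 1 / (A * s) = D at *
  generalize 4 / c = u at *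
  generalize 2 * Q / c = v at *
  generalize B * G = Y at *
  have p1 := mul_nonneg hQc hE0
  have p2 := mul_nonneg (by linarith : 0 ≤ K) hE0
  have p3 := mul_nonneg hc4 hE0
  have f1 : Y * (1 + 4 * E) + Y * (K + u * E) ≤ (5 + K + u + v) * (Y * (1 + E)) := by
    have : (1 + 4 * E) + (K + u * E) ≤ (5 + K + u + v) * (1 + E) := by linarith
    linarith [mul_le_mul_of_nonneg_left this hBG]
  have f2 : D * (v * E) ≤ (5 + K + u + v) * (D * (1 + E)) := by
    have : v * E ≤ (5 + K + u + v) * (1 + E) := by linarith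
    linarith [mul_le_mul_of_nonneg_left this hD0]
  have f3 : (5 + K + u + v) * ((Y + D) * (1 + E)) =
    (5 + K + u + v) * (Y * (1 + E)) + (5 + K + u + v) * (D * (1 + E)) := by ring
  rw [f3]
  linarith

lemma hb_convex {H : Type*} [NormedAddCommGroup H] [InnerProductSpace ℝ H] [CompleteSpace H]
    (Φ : H → ℝ) (d u z : H) (hΦ : ConvexOn ℝ Set.univ Φ) (hd : HasGradientAt Φ d u) :
    Φ u - Φ z ≤ inner ℝ d (u - z) := by
  have h1 : ConvexOn ℝ Set.univ (Φ ∘ AffineMap.lineMap (k := ℝ) u z) := by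
    simpa using hΦ.comp_affineMap (AffineMap.lineMap (k := ℝ) u z)
  have h2 : HasDerivAt (AffineMap.lineMap (k := ℝ) u z : ℝ → H) (z - u) 0 :=
    AffineMap.hasDerivAt_lineMap
  have h3 : HasDerivAt (Φ ∘ AffineMap.lineMap (k := ℝ) u z) (inner ℝ d (z - u)) 0 := by
    have h := hd.hasFDerivAt
    have h' : HasFDerivAt Φ ((InnerProductSpace.toDual ℝ H) d)
      ((AffineMap.lineMap (k := ℝ) u z : ℝ → H) 0) := by simpa using h
    have := h'.comp_hasDerivAt (0:ℝ) h2
    simpa using this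
  have h4 := h1.le_slope_of_hasDerivAt (mem_univ _) (mem_univ _) zero_lt_one h3
  simp [slope_def_field] at h4
  rw [inner_sub_right] at h4 ⊢
  linarith

theorem heavy_ball_energy_little_o
    {H : Type*} [NormedAddCommGroup H] [InnerProductSpace ℝ H] [CompleteSpace H]
    (c α : ℝ) (hc : 0 < c) (hα0 : 0 ≤ α) (hα1 : α < 1)
    (Φ : H → ℝ) (Φ' : H → H) (Φstar : ℝ)
    (hΦconv : ConvexOn ℝ Set.univ Φ)
    (hΦdiff : ∀ u : H, HasGradientAt Φ (Φ' u) u)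
    (hΦcont : Continuous Φ')
    (hargmin : {v : H | ∀ u, Φ v ≤ Φ u}.Nonempty)
    (hΦstar : ∀ v ∈ {v : H | ∀ u, Φ v ≤ Φ u}, Φ v = Φstar)
    (g : ℝ → H) (hg : IntegrableOn g (Ici (0:ℝ)))
    (x x' x'' : ℝ → H)
    (hx1 : ∀ t ∈ Ici (0:ℝ), HasDerivAt x (x' t) t)
    (hx2 : ∀ t ∈ Ici (0:ℝ), HasDerivAt x' (x'' t) t)
    (hode : ∀ t ∈ Ici (0:ℝ),
      x'' t + (c / (1 + t) ^ α) • x' t + Φ' (x t) = g t)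
    (ν : ℝ) (hν1 : α ≤ ν) (hν2 : ν ≤ (1 + α) / 2)
    (hgν : IntegrableOn (fun t => (1 + t) ^ ν * ‖g t‖) (Ici (0:ℝ))) :
    Tendsto (fun t => t ^ (2 * ν) * (‖x' t‖ ^ 2 / 2 + Φ (x t) - Φstar))
      atTop (nhds 0) := by
  
  obtain ⟨z, hz⟩ := hargmin
  have hzs := hΦstar z hz
  have hν0 : 0 ≤ ν := hα0.trans hν1
  set β := 2 * ν with hβ
  have hβ0 : 0 ≤ β := by positivity
  have hβα : β ≤ 1 + α := by linarith
  obtain ⟨K, hK⟩ : ∃ K, K = β + 1 := ⟨_, rfl⟩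
  have hK1 : 1 ≤ K := by linarith
  set C := 5 + K + 4 / c + 2 * |(β - 1) * (β - 2)| / c with hC
  have hC5 : 5 + K ≤ C := by
    have : 0 ≤ 4 / c + 2 * |(β - 1) * (β - 2)| / c := by positivity
    linarith
  -- choice of T
  obtain ⟨T, hT1, hTA⟩ : ∃ T : ℝ, 1 ≤ T ∧ ∀ t, T ≤ t →
      1 ≤ (1 + t) ^ (1 - α) ∧ |β - 1| / 2 + K ≤ c * (1 + t) ^ (1 - α) / 4 ∧
      3 * K / 2 ≤ c * (1 + t) ^ (1 - α) := by
    have h1 : Tendsto (fun t : ℝ => (1 + t) ^ (1 - α)) atTop atTop :=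
      (tendsto_rpow_atTop (by linarith)).comp (tendsto_atTop_add_const_left _ 1 tendsto_id)
    have h2 := h1.eventually_ge_atTop (1 + (4 * (|β - 1| / 2 + K)) / c)
    obtain ⟨T, hT⟩ := (h2.and (eventually_ge_atTop 1)).exists_forall_of_atTop
    refine ⟨T, (hT T le_rfl).2, fun t ht => ?_⟩
    have h3 := (hT t ht).1
    have hb := abs_nonneg (β - 1)
    have h4 : 0 ≤ (4 * (|β - 1| / 2 + K)) / c := by positivity
    have h5 : (4 * (|β - 1| / 2 + K)) / c ≤ (1 + t) ^ (1 - α) := by linarith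
    rw [div_le_iff₀ hc] at h5
    exact ⟨by linarith, by linarith, by linarith⟩
  have hP : ∀ t, 0 ≤ Φ (x t) - Φstar := fun t => by linarith [hz (x t)]
  let W : ℝ → ℝ := fun t => ‖x' t‖ ^ 2 / 2 + Φ (x t) - Φstar
  let F : ℝ → ℝ := fun t => (1 + t) ^ β * W t
  let p : ℝ → ℝ := fun t => inner ℝ (x' t) (x t - z)
  let h : ℝ → ℝ := fun t => ‖x t - z‖ ^ 2 / 2
  let E : ℝ → ℝ := fun t => (1 + t) ^ β * W t + K * ((1 + t) ^ (β - 1) * p t)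
    + K * ((c * (1 + t) ^ (β - 1 - α) - (β - 1) * (1 + t) ^ (β - 2)) * h t)
  let φ : ℝ → ℝ := fun t => (1 + t) ^ ν * ‖g t‖ + 1 / ((1 + t) ^ (1 - α) * (1 + t))
  let dW : ℝ → ℝ := fun t => inner ℝ (x' t) (x'' t) + inner ℝ (Φ' (x t)) (x' t)
  have hW : ∀ t, 0 ≤ t → HasDerivAt W (dW t) t := by
    intro t ht
    have a1 := ((hx2 t ht).norm_sq).div_const 2
    have a2 := (hΦdiff (x t)).hasFDerivAt.comp_hasDerivAt t (hx1 t ht)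
    have a3 := (a1.add a2).sub_const Φstar
    refine a3.congr_deriv ?_
    simp [dW]
  have hp : ∀ t, 0 ≤ t → HasDerivAt p (‖x' t‖ ^ 2 + inner ℝ (x'' t) (x t - z)) t := by
    intro t ht
    have := (hx2 t ht).inner ℝ ((hx1 t ht).sub_const z)
    rwa [real_inner_self_eq_norm_sq] at this
  have hh : ∀ t, 0 ≤ t → HasDerivAt h (p t) t := by
    intro t ht
    have := (((hx1 t ht).sub_const z).norm_sq).div_const 2
    refine this.congr_deriv ?_
    simp [p, real_inner_comm]
  have hpow : ∀ (r t : ℝ), 0 ≤ t → HasDerivAt (fun t : ℝ => (1 + t) ^ r) (r * (1 + t) ^ (r - 1)) t := by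
    intro r t ht
    have := ((hasDerivAt_id t).const_add 1).rpow_const (p := r) (Or.inl (by simp; linarith))
    simpa using this
  -- power identities
  have id0 : ∀ t : ℝ, 0 ≤ t → (1 + t) ^ β = ((1 + t) ^ ν) ^ 2 := by
    intro t ht
    rw [← Real.rpow_natCast, ← Real.rpow_mul (by linarith)]
    congr 1; push_cast; linarith
  have id1 : ∀ t r : ℝ, 0 ≤ t → (1 + t) ^ (r - 1) = (1 + t) ^ r / (1 + t) := by
    intro t r ht
    rw [Real.rpow_sub_one (by linarith)]
  have id2 : ∀ t r : ℝ, 0 ≤ t → (1 + t) ^ (r - 2) = (1 + t) ^ r / (1 + t) ^ 2 := by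
    intro t r ht
    rw [Real.rpow_sub (by linarith), Real.rpow_ofNat]
  have id3 : ∀ t r : ℝ, 0 ≤ t → (1 + t) ^ (r - α) = (1 + t) ^ r * (1 + t) ^ (1 - α) / (1 + t) := by
    intro t r ht
    rw [← Real.rpow_add (by linarith), ← Real.rpow_sub_one (by linarith)]
    congr 1; ring
  have id4 : ∀ t : ℝ, 0 ≤ t → (1 + t) ^ α = (1 + t) / (1 + t) ^ (1 - α) := by
    intro t ht
    rw [Real.rpow_sub (by linarith), Real.rpow_one]
    have : 0 < (1 + t) ^ α := Real.rpow_pos_of_pos (by linarith) _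
    have : 0 < 1 + t := by linarith
    field_simp
  -- equation consequences
  have q1 : ∀ t, 0 ≤ t → dW t = inner ℝ (g t) (x' t) -
      c * (1 + t) ^ (1 - α) / (1 + t) * ‖x' t‖ ^ 2 := by
    intro t ht
    have e : x'' t = g t - (c / (1 + t) ^ α) • x' t - Φ' (x t) := by
      rw [← hode t ht]; abel
    simp only [dW]
    rw [e, inner_sub_right, inner_sub_right, inner_smul_right, real_inner_self_eq_norm_sq,
      real_inner_comm (g t), real_inner_comm (Φ' (x t)), id4 t ht, div_div_eq_mul_div]
    ring
  have q2 : ∀ t, 0 ≤ t → inner ℝ (x'' t) (x t - z) = inner ℝ (g t) (x t - z) -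
      c * (1 + t) ^ (1 - α) / (1 + t) * p t - inner ℝ (Φ' (x t)) (x t - z) := by
    intro t ht
    have e : x'' t = g t - (c / (1 + t) ^ α) • x' t - Φ' (x t) := by
      rw [← hode t ht]; abel
    simp only [p]
    rw [e, inner_sub_left, inner_sub_left, real_inner_smul_left, id4 t ht, div_div_eq_mul_div]
  have hE : ∀ t, 0 ≤ t → HasDerivAt E (
      (β * (1 + t) ^ (β - 1)) * W t + (1 + t) ^ β * dW t
      + K * ((β - 1) * (1 + t) ^ (β - 1 - 1) * p t
        + (1 + t) ^ (β - 1) * (‖x' t‖ ^ 2 + inner ℝ (x'' t) (x t - z)))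
      + K * ((c * ((β - 1 - α) * (1 + t) ^ (β - 1 - α - 1))
          - (β - 1) * ((β - 2) * (1 + t) ^ (β - 2 - 1))) * h t
        + (c * (1 + t) ^ (β - 1 - α) - (β - 1) * (1 + t) ^ (β - 2)) * p t)) t := by
    intro t ht
    have a1 := (hpow β t ht).mul (hW t ht)
    have a2 := ((hpow (β - 1) t ht).mul (hp t ht)).const_mul K
    have a3 := (((((hpow (β - 1 - α) t ht).const_mul c).sub
      ((hpow (β - 2) t ht).const_mul (β - 1))).mul (hh t ht))).const_mul K
    exact (a1.add a2).add a3
  have hFd : ∀ t, 0 ≤ t → HasDerivAt F (β * (1 + t) ^ (β - 1) * W t + (1 + t) ^ β * dW t) t :=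
    fun t ht => (hpow β t ht).mul (hW t ht)
  have hEform : ∀ t, 0 ≤ t → E t = ((1 + t) ^ ν) ^ 2 * (‖x' t‖ ^ 2 / 2 + (Φ (x t) - Φstar)
      + K * (p t / (1 + t))
      + K * (c * (1 + t) ^ (1 - α) - (β - 1)) * (‖x t - z‖ / (1 + t)) ^ 2 / 2) := by
    intro t ht
    simp only [E, W, h]
    rw [id3 t _ ht, id1 t _ ht, id2 t _ ht, id0 t ht]
    have : 0 < 1 + t := by linarith
    field_simp
    ring
  have hlow : ∀ t, T ≤ t → ((1 + t) ^ ν) ^ 2 * ((‖x' t‖ ^ 2 / 2 + (Φ (x t) - Φstar)) / 2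
      + K * c * (1 + t) ^ (1 - α) * (‖x t - z‖ / (1 + t)) ^ 2 / 4) ≤ E t := by
    intro t ht
    have ht0 : 0 ≤ t := by linarith
    rw [hEform t ht0]
    refine hb_alg1 c β K _ _ _ _ _ _ hK1 (hP t) ?_ (hTA t ht).2.1
    rw [abs_div, abs_of_pos (by linarith : 0 < 1 + t), ← mul_div_assoc]
    gcongr
    exact abs_real_inner_le_norm _ _
  have hFform : ∀ t, 0 ≤ t → F t = ((1 + t) ^ ν) ^ 2 * (‖x' t‖ ^ 2 / 2 + (Φ (x t) - Φstar)) := by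
    intro t ht
    simp only [F, W]
    rw [id0 t ht]; ring
  have hφint : IntegrableOn φ (Ici T) := by
    refine (hgν.mono_set (Ici_subset_Ici.2 (by linarith))).add ?_
    have a1 : IntegrableOn (fun t : ℝ => (t + 1) ^ (α - 2)) (Ioi (0:ℝ)) :=
      integrableOn_add_rpow_Ioi_of_lt (by linarith) (by norm_num)
    refine (a1.mono_set (fun t ht => ?_)).congr_fun (fun t ht => ?_) measurableSet_Ici
    · have : T ≤ t := ht
      exact lt_of_lt_of_le (by linarith) this
    · have : T ≤ t := ht
      have ht0 : 0 < 1 + t := by linarith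
      simp only
      rw [← Real.rpow_add_one ht0.ne', one_div, ← Real.rpow_neg ht0.le, add_comm t 1]
      congr 1; ring
  have hFt : Tendsto F atTop (nhds 0) := by
    refine hb_growth T C hT1 (by linarith) E F _ _ φ (fun t ht => hE t (by linarith))
      (fun t ht => hFd t (by linarith)) ?_ ?_ ?_ hφint ?_ ?_
    · intro t ht
      rw [hFform t (by linarith)]
      have := hP t
      positivity
    · intro t ht
      have h1 := hlow t ht
      rw [hFform t (by linarith)]
      have hA := (hTA t ht).1
      have : 0 ≤ ((1 + t) ^ ν) ^ 2 *
        (K * c * (1 + t) ^ (1 - α) * (‖x t - z‖ / (1 + t)) ^ 2 / 4) := by positivity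
      linarith
    · intro t ht
      have hA := (hTA t ht).1
      have : 0 < 1 + t := by linarith
      positivity
    · intro t ht
      have ht0 : 0 ≤ t := by linarith
      have hs : 0 < 1 + t := by linarith
      have hA := (hTA t ht).1
      have h2 := hb_alg2 c α β K (1 + t) ((1 + t) ^ (1 - α)) ((1 + t) ^ ν) ‖x' t‖
        (‖x t - z‖ / (1 + t)) (Φ (x t) - Φstar) ‖g t‖ (inner ℝ (g t) (x' t))
        (inner ℝ (g t) (x t - z) / (1 + t)) (E t) hc hK hβ0 hs hA (by positivity) (norm_nonneg _)
        (norm_nonneg _) (by positivity) hβα (hP t) (real_inner_le_norm _ _)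
        (by rw [← mul_div_assoc]; gcongr; exact real_inner_le_norm _ _)
        (hTA t ht).2.2 (hlow t ht)
      have h3 := hb_convex Φ (Φ' (x t)) (x t) z hΦconv (hΦdiff (x t))
      rw [hzs] at h3
      rw [hFform t ht0]
      refine le_trans ?_ h2
      rw [q1 t ht0, q2 t ht0]
      simp only [W, h]
      rw [id1 t (β - 1) ht0, id1 t (β - 1 - α) ht0, id1 t (β - 2) ht0, id3 t (β - 1) ht0, id1 t β ht0,
        id2 t β ht0, id0 t ht0]
      have h4 : 0 ≤ K * (((1 + t) ^ ν) ^ 2 / (1 + t)) *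
          (inner ℝ (Φ' (x t)) (x t - z) - (Φ (x t) - Φstar)) :=
        mul_nonneg (by positivity) (by linarith)
      rw [← sub_nonneg]
      refine h4.trans_eq ?_
      generalize (1 + t) ^ ν = B
      generalize (1 + t) ^ (1 - α) = A
      generalize 1 + t = s at *
      field_simp
      ring
    · intro t ht
      have ht0 : 0 ≤ t := by linarith
      have hs : 0 < 1 + t := by linarith
      have hA := (hTA t ht).1
      have hg1 := real_inner_le_norm (g t) (x' t)
      rw [q1 t ht0, id1 t _ ht0]
      have hw : W t = ‖x' t‖ ^ 2 / 2 + (Φ (x t) - Φstar) := by simp only [W]; ring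
      have hP' := hP t
      have hW0 : 0 ≤ W t := by rw [hw]; positivity
      have hF1 : F t = ((1 + t) ^ ν) ^ 2 * W t := by rw [hFform t ht0, hw]
      rw [hF1, id0 t ht0]
      simp only [φ]
      have hB : 0 ≤ (1 + t) ^ ν := by positivity
      have hn2 : ‖x' t‖ ^ 2 ≤ 2 * W t := by rw [hw]; linarith
      have hr : 0 ≤ c * (1 + t) ^ (1 - α) / (1 + t) * ‖x' t‖ ^ 2 := by positivity
      have hD : 0 ≤ 1 / ((1 + t) ^ (1 - α) * (1 + t)) := by positivity
      generalize 1 / ((1 + t) ^ (1 - α) * (1 + t)) = D at *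
      generalize c * (1 + t) ^ (1 - α) / (1 + t) * ‖x' t‖ ^ 2 = R at *
      generalize (1 + t) ^ ν = B at *
      generalize W t = w at *
      have hn := norm_nonneg (x' t)
      have hG := norm_nonneg (g t)
      generalize ‖x' t‖ = n at *
      generalize ‖g t‖ = G at *
      have b1 : β * (B ^ 2 / (1 + t)) * w ≤ C * (B ^ 2 * w / (1 + t)) := by
        have : 0 ≤ B ^ 2 * w / (1 + t) := by positivity
        calc β * (B ^ 2 / (1 + t)) * w = β * (B ^ 2 * w / (1 + t)) := by ring
          _ ≤ _ := by gcongr; linarith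
      have b2 : B ^ 2 * (inner ℝ (g t) (x' t) - R) ≤ B * G * (1 + B ^ 2 * w) := by
        calc B ^ 2 * (inner ℝ (g t) (x' t) - R) ≤ B ^ 2 * (G * n) := by gcongr; linarith
          _ = B * G * (B * n) := by ring
          _ ≤ _ := by
            gcongr
            have := mul_le_mul_of_nonneg_left hn2 (sq_nonneg B)
            nlinarith [sq_nonneg (B * n - 1)]
      have b3 : B * G * (1 + B ^ 2 * w) ≤ C * ((B * G + D) * (1 + B ^ 2 * w)) := by
        have c1 : B * G * (1 + B ^ 2 * w) ≤ (B * G + D) * (1 + B ^ 2 * w) := by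
          gcongr; linarith
        have c2 : 0 ≤ (B * G + D) * (1 + B ^ 2 * w) := by positivity
        exact c1.trans (le_mul_of_one_le_left c2 (by linarith))
      linarith
  refine tendsto_of_tendsto_of_tendsto_of_le_of_le' tendsto_const_nhds hFt ?_ ?_
  · filter_upwards [eventually_ge_atTop 0] with t ht
    have := hP t
    have : 0 ≤ ‖x' t‖ ^ 2 / 2 + Φ (x t) - Φstar := by
      have := sq_nonneg ‖x' t‖; linarith
    positivity
  · filter_upwards [eventually_ge_atTop 0] with t ht
    have := hP t
    have : 0 ≤ ‖x' t‖ ^ 2 / 2 + Φ (x t) - Φstar := by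
      have := sq_nonneg ‖x' t‖; linarith
    simp only [F, W]
    gcongr
    linarith
end

section
/- Let x be a solution of the heavy ball equation with vanishing damping and source term g satisfying ∫₀^∞ (1+t)^α ‖g(t)‖ dt < ∞, and suppose the interior of argmin Φ is nonempty. Then there exists x* ∈ argmin Φ such that x(t) → x* strongly in H (i.e. in norm) as t → +∞. -/
open MeasureTheory Filter Real Set RealInnerProductSpace

lemma hb_integrable_of_bound (T C : ℝ) (p : ℝ → ℝ) (hp : ContinuousOn p (Ici T))
    (hp0 : ∀ t ∈ Ici T, 0 ≤ p t) (h : ∀ t, T ≤ t → ∫ s in T..t, p s ≤ C) :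
    IntegrableOn p (Ioi T) := by
  refine integrableOn_Ioi_of_intervalIntegral_norm_bounded (b := fun t : ℝ => t) (l := atTop)
    C T ?_ tendsto_id ?_
  · intro i
    exact ((hp.mono Icc_subset_Ici_self).integrableOn_Icc).mono_set Ioc_subset_Icc_self
  · filter_upwards [eventually_ge_atTop T] with t ht
    refine le_trans (le_of_eq ?_) (h t ht)
    refine intervalIntegral.integral_congr fun s hs => ?_
    rw [uIcc_of_le ht] at hs
    exact Real.norm_of_nonneg (hp0 s hs.1)

lemma hb_integral_le (T t : ℝ) (ht : T ≤ t) (k : ℝ → ℝ) (hk0 : ∀ t ∈ Ici T, 0 ≤ k t)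
    (hk : IntegrableOn k (Ici T)) : ∫ s in T..t, k s ≤ ∫ s in Ici T, k s := by
  rw [intervalIntegral.integral_of_le ht]
  refine setIntegral_mono_set hk ?_ (LE.le.eventuallyLE ?_)
  · exact (ae_restrict_iff' measurableSet_Ici).2 (ae_of_all _ hk0)
  · exact fun s hs => hs.1.le

lemma hb_lyap (T : ℝ) (W W' k p : ℝ → ℝ) (hW : ∀ t ∈ Ici T, HasDerivAt W (W' t) t)
    (hW0 : ∀ t ∈ Ici T, 0 ≤ W t) (hk0 : ∀ t ∈ Ici T, 0 ≤ k t) (hp0 : ∀ t ∈ Ici T, 0 ≤ p t)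
    (hk : IntegrableOn k (Ici T)) (hp : ContinuousOn p (Ici T))
    (h : ∀ t ∈ Ici T, W' t ≤ - p t + k t * √(1 + 2 * W t)) : IntegrableOn p (Ioi T) := by
  set R : ℝ → ℝ := fun t => √(1 + 2 * W t) with hR
  have hR1 : ∀ t ∈ Ici T, 1 ≤ R t := by
    intro t ht
    have := hW0 t ht
    exact Real.one_le_sqrt.2 (by linarith)
  have hRd : ∀ t ∈ Ici T, HasDerivAt R (W' t / R t) t := by
    intro t ht
    have := hW0 t ht
    have h1 := (((hW t ht).const_mul 2).const_add 1).sqrt (by positivity)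
    convert h1 using 1
    simp only [hR]
    field_simp
  have hRc : ContinuousOn R (Ici T) := fun t ht => (hRd t ht).continuousAt.continuousWithinAt
  set I := ∫ s in Ici T, k s
  have hI : 0 ≤ I := setIntegral_nonneg measurableSet_Ici hk0
  have hRb : ∀ t, T ≤ t → R t ≤ R T + I := by
    intro t ht
    have := intervalIntegral.sub_le_integral_of_hasDeriv_right_of_le (φ := k) ht
      (hRc.mono Icc_subset_Ici_self)
      (fun s hs => (hRd s hs.1.le).hasDerivWithinAt) (hk.mono_set Icc_subset_Ici_self) (by
        intro s hs
        have hs' : s ∈ Ici T := hs.1.le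
        have h1 := hR1 s hs'
        rw [div_le_iff₀ (by linarith)]
        have := h s hs'
        have := hp0 s hs'
        linarith)
    have h2 := hb_integral_le T t ht k hk0 hk
    linarith
  set M := R T + I
  have hM : 1 ≤ M := by have := hR1 T self_mem_Ici; linarith
  refine hb_integrable_of_bound T (M * (I + R T)) p hp hp0 fun t ht => ?_
  have hpI : IntegrableOn p (Icc T t) := (hp.mono Icc_subset_Ici_self).integrableOn_Icc
  have hkI : IntegrableOn k (Icc T t) := hk.mono_set Icc_subset_Ici_self
  have := intervalIntegral.sub_le_integral_of_hasDeriv_right_of_le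
      (φ := fun s => k s - M⁻¹ * p s) ht
      (hRc.mono Icc_subset_Ici_self)
      (fun s hs => (hRd s hs.1.le).hasDerivWithinAt)
      (hkI.sub (hpI.const_mul _)) (by
        intro s hs
        have hs' : s ∈ Ici T := hs.1.le
        have h1 := hR1 s hs'
        have h2 := hRb s hs'
        have h3 := hp0 s hs'
        rw [div_le_iff₀ (by linarith)]
        have h4 : M⁻¹ * R s ≤ 1 := by
          rw [inv_mul_le_iff₀ (by linarith)]; linarith
        have := h s hs'
        nlinarith)
  have i1 : IntervalIntegrable p volume T t :=
    (intervalIntegrable_iff_integrableOn_Icc_of_le ht).2 hpI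
  have i2 : IntervalIntegrable k volume T t :=
    (intervalIntegrable_iff_integrableOn_Icc_of_le ht).2 hkI
  rw [intervalIntegral.integral_sub i2 (i1.const_mul _), intervalIntegral.integral_const_mul] at this
  have h2 := hb_integral_le T t ht k hk0 hk
  have h3 := hR1 t ht
  rw [← inv_mul_le_iff₀ (by linarith)]
  linarith

lemma hb_speed (T m : ℝ) (hm : 0 < m) (Y D n k : ℝ → ℝ)
    (hY0 : ∀ t ∈ Ici T, 0 ≤ Y t)
    (hY : ∀ t ∈ Ici T, HasDerivAt (fun s => Y s ^ 2) (2 * D t) t)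
    (hk0 : ∀ t ∈ Ici T, 0 ≤ k t) (hn0 : ∀ t ∈ Ici T, 0 ≤ n t) (hnY : ∀ t ∈ Ici T, n t ≤ Y t)
    (hk : IntegrableOn k (Ici T)) (hn : ContinuousOn n (Ici T))
    (h : ∀ t ∈ Ici T, D t ≤ (k t - m * n t) * Y t) : IntegrableOn n (Ioi T) := by
  set I := ∫ s in Ici T, k s
  refine hb_integrable_of_bound T (m⁻¹ * (I + m + (1 + Y T))) n hn hn0 fun t ht => ?_
  set ε : ℝ := 1 / (1 + (t - T)) with hε
  have htT : 0 < 1 + (t - T) := by linarith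
  have hεpos : 0 < ε := by positivity
  have hε1 : ε ≤ 1 := by rw [hε, div_le_one htT]; linarith
  have hεt : ε * (t - T) ≤ 1 := by
    rw [hε, div_mul_eq_mul_div, div_le_one htT]; linarith
  set R : ℝ → ℝ := fun s => √(ε ^ 2 + Y s ^ 2) with hR
  have hRpos : ∀ s, 0 < R s := fun s => Real.sqrt_pos.2 (by positivity)
  have hRsq : ∀ s, R s ^ 2 = ε ^ 2 + Y s ^ 2 := fun s => Real.sq_sqrt (by positivity)
  have hRd : ∀ t ∈ Ici T, HasDerivAt R (D t / R t) t := by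
    intro t ht
    have h1 := ((hY t ht).const_add (ε ^ 2)).sqrt (by positivity)
    convert h1 using 1
    have := hRpos t
    simp only [hR] at this ⊢
    field_simp
  have hRc : ContinuousOn R (Ici T) := fun t ht => (hRd t ht).continuousAt.continuousWithinAt
  have hnI : IntegrableOn n (Icc T t) := (hn.mono Icc_subset_Ici_self).integrableOn_Icc
  have hkI : IntegrableOn k (Icc T t) := hk.mono_set Icc_subset_Ici_self
  have hcI : IntegrableOn (fun _ : ℝ => m * ε) (Icc T t) := continuousOn_const.integrableOn_Icc
  have := intervalIntegral.sub_le_integral_of_hasDeriv_right_of_le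
      (φ := fun s => k s - m * n s + m * ε) ht
      (hRc.mono Icc_subset_Ici_self)
      (fun s hs => (hRd s hs.1.le).hasDerivWithinAt)
      ((hkI.sub (hnI.const_mul m)).add hcI) (by
        intro s hs
        have hs' : s ∈ Ici T := hs.1.le
        have h1 := hRpos s
        have h2 := hRsq s
        have h3 := hn0 s hs'
        have h4 := hnY s hs'
        have h5 := hY0 s hs'
        have h6 := hk0 s hs'
        have h7 := h s hs'
        rw [div_le_iff₀ h1]
        have h8 : Y s ≤ R s := by
          apply le_of_sq_le_sq _ h1.le
          nlinarith
        have h9 : R s ≤ Y s + ε := by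
          apply le_of_sq_le_sq _ (by positivity)
          nlinarith
        have a1 : k s * Y s ≤ k s * R s := by gcongr
        have a2 : n s * (R s - Y s) ≤ n s * ε := by gcongr; linarith
        have a3 : n s * ε ≤ R s * ε := by gcongr; linarith
        have a4 : m * (n s * (R s - Y s)) ≤ m * (R s * ε) := mul_le_mul_of_nonneg_left (a2.trans a3) hm.le
        nlinarith)
  have i1 : IntervalIntegrable n volume T t :=
    (intervalIntegrable_iff_integrableOn_Icc_of_le ht).2 hnI
  have i2 : IntervalIntegrable k volume T t :=
    (intervalIntegrable_iff_integrableOn_Icc_of_le ht).2 hkI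
  rw [intervalIntegral.integral_add (i2.sub (i1.const_mul _)) intervalIntegrable_const,
    intervalIntegral.integral_sub i2 (i1.const_mul _), intervalIntegral.integral_const_mul,
    intervalIntegral.integral_const, smul_eq_mul] at this
  have h2 := hb_integral_le T t ht k hk0 hk
  have h3 := hRpos t
  have h4 : R T ≤ Y T + 1 := by
    have := hY0 T self_mem_Ici
    apply le_of_sq_le_sq _ (by positivity)
    rw [hRsq]
    nlinarith
  have h5 : (t - T) * (m * ε) ≤ m := by nlinarith
  rw [le_inv_mul_iff₀ hm]
  linarith

lemma hb_grad {H : Type*} [NormedAddCommGroup H] [InnerProductSpace ℝ H] [CompleteSpace H]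
    (Φ : H → ℝ) (Φ' : H → H) (hΦconv : ConvexOn ℝ Set.univ Φ)
    (hΦdiff : ∀ u : H, HasGradientAt Φ (Φ' u) u) (u v : H) :
    Φ u - Φ v ≤ ⟪Φ' u, u - v⟫ := by
  have hc : ConvexOn ℝ Set.univ (fun s : ℝ => Φ (AffineMap.lineMap u v s)) :=
    hΦconv.comp_affineMap (AffineMap.lineMap u v : ℝ →ᵃ[ℝ] H)
  have hd : HasDerivAt (fun s : ℝ => Φ (AffineMap.lineMap u v s)) (⟪Φ' u, v - u⟫) 0 := by
    have h1 : HasDerivAt (fun s : ℝ => (AffineMap.lineMap u v s : H)) (v - u) 0 :=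
      AffineMap.hasDerivAt_lineMap
    have h2 : HasFDerivAt Φ (InnerProductSpace.toDual ℝ H (Φ' u))
        ((fun s : ℝ => (AffineMap.lineMap u v s : H)) 0) := by
      simpa using (hΦdiff u).hasFDerivAt
    have h3 := h2.comp_hasDerivAt (0:ℝ) h1
    rw [InnerProductSpace.toDual_apply_apply] at h3
    exact h3
  have := hc.le_slope_of_hasDerivAt (mem_univ 0) (mem_univ 1) one_pos hd
  simp [slope_def_field] at this
  rw [← neg_sub v u, inner_neg_right]
  linarith

lemma hb_interior {H : Type*} [NormedAddCommGroup H] [InnerProductSpace ℝ H] [CompleteSpace H]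
    (Φ : H → ℝ) (Φ' : H → H) (hΦconv : ConvexOn ℝ Set.univ Φ)
    (hΦdiff : ∀ u : H, HasGradientAt Φ (Φ' u) u)
    (hint : (interior {v : H | ∀ u, Φ v ≤ Φ u}).Nonempty) :
    ∃ z, (∀ u, Φ z ≤ Φ u) ∧ ∃ r > 0, ∀ u, r * ‖Φ' u‖ ≤ ⟪Φ' u, u - z⟫ := by
  obtain ⟨z, hz⟩ := hint
  refine ⟨z, interior_subset hz, ?_⟩
  obtain ⟨r, hr, hball⟩ := Metric.isOpen_iff.1 isOpen_interior z hz
  refine ⟨r / 2, by positivity, fun u => ?_⟩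
  by_cases h0 : Φ' u = 0
  · simp [h0]
  have hn : 0 < ‖Φ' u‖ := norm_pos_iff.2 h0
  set y := z + ((r / 2) / ‖Φ' u‖) • Φ' u with hy
  have hyb : y ∈ Metric.ball z r := by
    rw [Metric.mem_ball, dist_eq_norm, hy, add_sub_cancel_left, norm_smul, Real.norm_of_nonneg (by positivity),
      div_mul_cancel₀ _ hn.ne']
    linarith
  have hym : ∀ w, Φ y ≤ Φ w := interior_subset (hball hyb)
  have h1 := hb_grad Φ Φ' hΦconv hΦdiff u y
  have h2 := hym u
  have h3 : u - y = (u - z) - ((r / 2) / ‖Φ' u‖) • Φ' u := by rw [hy]; abel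
  rw [h3, inner_sub_right, inner_smul_right, real_inner_self_eq_norm_sq] at h1
  have h4 : (r / 2) / ‖Φ' u‖ * ‖Φ' u‖ ^ 2 = r / 2 * ‖Φ' u‖ := by field_simp
  linarith

/-- algebraic inequality behind the decay of the Lyapunov function -/
lemma hb_alg {H : Type*} [NormedAddCommGroup H] [InnerProductSpace ℝ H]
    (p v G g a : H) (c b b1 b2 b3 γ r F : ℝ) (hc : 0 < c) (hb : 0 < b)
    (hb1 : 0 ≤ b1) (hb1c : b1 ≤ c / 8) (hb2 : b2 ≤ 0) (hb3 : 0 ≤ b3) (hγ : b * γ = c)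
    (ha : a + γ • v + G = g) (hr0 : 0 ≤ r) (hr : r * ‖G‖ ≤ ⟪G, p⟫) (hF : F ≤ ⟪G, p⟫) :
    2 * b * b1 * F + b ^ 2 * ⟪G, v⟫
      + ⟪(c / 2 + b1) • p + b • v, b2 • p + (c / 2 + b1) • v + b1 • v + b • a⟫
      + (1 / 2) * (b2 * (c / 2 - 2 * b1) + (c / 2 + b1) * (- 2 * b2) - b1 * b2 - b * b3) * ⟪p, p⟫
      + ((c / 2 + b1) * (c / 2 - 2 * b1) - b * b2) * ⟪p, v⟫
    ≤ - (3 * c / 8 * r * (b * ‖G‖)) + b * ‖g‖ * ‖(c / 2 + b1) • p + b • v‖ := by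
  have hba : b • a = b • g - c • v - b • G := by
    rw [← ha, ← hγ, smul_add, smul_add, smul_smul]; abel
  have hg : ⟪(c / 2 + b1) • p + b • v, b • g⟫ ≤ b * ‖g‖ * ‖(c / 2 + b1) • p + b • v‖ := by
    rw [inner_smul_right]
    have := real_inner_le_norm ((c / 2 + b1) • p + b • v) g
    nlinarith
  have hq : ⟪(c / 2 + b1) • p + b • v, b2 • p + (c / 2 + b1) • v + b1 • v + b • a⟫
      = ⟪(c / 2 + b1) • p + b • v, b • g⟫
        + ⟪(c / 2 + b1) • p + b • v, b2 • p + (c / 2 + b1) • v + b1 • v - c • v - b • G⟫ := by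
    rw [← inner_add_right, hba]; congr 1; abel
  rw [hq]
  have hpp : 0 ≤ ⟪p, p⟫ := real_inner_self_nonneg
  have hvv : 0 ≤ ⟪v, v⟫ := real_inner_self_nonneg
  have e : ⟪(c / 2 + b1) • p + b • v, b2 • p + (c / 2 + b1) • v + b1 • v - c • v - b • G⟫
      = (c / 2 + b1) * b2 * ⟪p, p⟫ + (c / 2 + b1) * (2 * b1 - c / 2) * ⟪p, v⟫
        - (c / 2 + b1) * b * ⟪G, p⟫ + b * b2 * ⟪p, v⟫ + b * (2 * b1 - c / 2) * ⟪v, v⟫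
        - b ^ 2 * ⟪G, v⟫ := by
    simp only [inner_add_left, inner_add_right, inner_sub_right, inner_smul_left, inner_smul_right,
      real_inner_comm G, real_inner_comm p v]
    simp
    ring
  rw [e]
  have k1 : b * (2 * b1 - c / 2) * ⟪v, v⟫ ≤ 0 :=
    mul_nonpos_of_nonpos_of_nonneg (mul_nonpos_of_nonneg_of_nonpos hb.le (by linarith)) hvv
  have k2 : (b2 * (c / 2 - 3 * b1) - b * b3) * ⟪p, p⟫ ≤ 0 := by
    refine mul_nonpos_of_nonpos_of_nonneg ?_ hpp
    have := mul_nonpos_of_nonpos_of_nonneg hb2 (show 0 ≤ c / 2 - 3 * b1 by linarith)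
    have := mul_nonneg hb.le hb3
    linarith
  have k3 : 2 * b * b1 * F ≤ 2 * b * b1 * ⟪G, p⟫ := by gcongr
  have k4 : 3 * c / 8 * (r * ‖G‖) ≤ (c / 2 - b1) * ⟪G, p⟫ := by
    have h : 0 ≤ ⟪G, p⟫ := le_trans (by positivity) hr
    have : 3 * c / 8 * (r * ‖G‖) ≤ 3 * c / 8 * ⟪G, p⟫ := by gcongr
    have : 3 * c / 8 * ⟪G, p⟫ ≤ (c / 2 - b1) * ⟪G, p⟫ := by gcongr; linarith
    linarith
  have k5 := mul_le_mul_of_nonneg_left k4 hb.le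
  nlinarith

theorem heavy_ball_strong_convergence_int_nonempty
    {H : Type*} [NormedAddCommGroup H] [InnerProductSpace ℝ H] [CompleteSpace H]
    (c α : ℝ) (hc : 0 < c) (hα0 : 0 ≤ α) (hα1 : α < 1)
    (Φ : H → ℝ) (Φ' : H → H) (Φstar : ℝ)
    (hΦconv : ConvexOn ℝ Set.univ Φ)
    (hΦdiff : ∀ u : H, HasGradientAt Φ (Φ' u) u)
    (hΦcont : Continuous Φ')
    (hargmin : {v : H | ∀ u, Φ v ≤ Φ u}.Nonempty)
    (hΦstar : ∀ v ∈ {v : H | ∀ u, Φ v ≤ Φ u}, Φ v = Φstar)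
    (g : ℝ → H) (hg : IntegrableOn g (Ici (0:ℝ)))
    (x x' x'' : ℝ → H)
    (hx1 : ∀ t ∈ Ici (0:ℝ), HasDerivAt x (x' t) t)
    (hx2 : ∀ t ∈ Ici (0:ℝ), HasDerivAt x' (x'' t) t)
    (hode : ∀ t ∈ Ici (0:ℝ),
      x'' t + (c / (1 + t) ^ α) • x' t + Φ' (x t) = g t)
    (hgα : IntegrableOn (fun t => (1 + t) ^ α * ‖g t‖) (Ici (0:ℝ)))
    (hint : (interior {v : H | ∀ u, Φ v ≤ Φ u}).Nonempty) :
    ∃ xstar ∈ {v : H | ∀ u, Φ v ≤ Φ u}, Tendsto x atTop (nhds xstar) := by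
  obtain ⟨z, hz, r, hr, hzr⟩ := hb_interior Φ Φ' hΦconv hΦdiff hint
  set b : ℝ → ℝ := fun t => (1 + t) ^ α with hb
  set b1 : ℝ → ℝ := fun t => α * (1 + t) ^ (α - 1) with hb1
  set b2 : ℝ → ℝ := fun t => α * (α - 1) * (1 + t) ^ (α - 2) with hb2
  set b3 : ℝ → ℝ := fun t => α * (α - 1) * (α - 2) * (1 + t) ^ (α - 3) with hb3
  have hpow : ∀ (β t : ℝ), 0 ≤ t → HasDerivAt (fun s : ℝ => (1 + s) ^ β) (β * (1 + t) ^ (β - 1)) t := by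
    intro β t ht
    have h1 : HasDerivAt (fun s : ℝ => 1 + s) 1 t := (hasDerivAt_id t).const_add 1
    have h2 := h1.rpow_const (p := β) (Or.inl (by positivity))
    simpa using h2
  have hbd : ∀ t, 0 ≤ t → HasDerivAt b (b1 t) t := fun t ht => hpow α t ht
  have hb1d : ∀ t, 0 ≤ t → HasDerivAt b1 (b2 t) t := by
    intro t ht
    refine ((hpow (α - 1) t ht).const_mul α).congr_deriv ?_
    simp only [hb2]
    rw [show α - 1 - 1 = α - 2 by ring]; ring
  have hb2d : ∀ t, 0 ≤ t → HasDerivAt b2 (b3 t) t := by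
    intro t ht
    refine ((hpow (α - 2) t ht).const_mul (α * (α - 1))).congr_deriv ?_
    simp only [hb3]
    rw [show α - 2 - 1 = α - 3 by ring]; ring
  have hb1le : ∀ t, 0 ≤ t → 1 ≤ b t := fun t ht => Real.one_le_rpow (by linarith) hα0
  have hb1nn : ∀ t, 0 ≤ t → 0 ≤ b1 t := fun t ht => by simp only [hb1]; positivity
  have hb2np : ∀ t, 0 ≤ t → b2 t ≤ 0 := fun t ht =>
    mul_nonpos_of_nonpos_of_nonneg (mul_nonpos_of_nonneg_of_nonpos hα0 (by linarith)) (by positivity)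
  have hb3nn : ∀ t, 0 ≤ t → 0 ≤ b3 t := fun t ht =>
    mul_nonneg (mul_nonneg_of_nonpos_of_nonpos
      (mul_nonpos_of_nonneg_of_nonpos hα0 (by linarith)) (by linarith)) (by positivity)
  obtain ⟨T, hT0, hT⟩ : ∃ T, 0 ≤ T ∧ ∀ t, T ≤ t → b1 t ≤ c / 8 := by
    have h1 : Tendsto (fun t : ℝ => (1 + t) ^ (-(1 - α))) atTop (nhds 0) :=
      (tendsto_rpow_neg_atTop (by linarith : 0 < 1 - α)).comp
        (tendsto_atTop_add_const_left _ 1 tendsto_id)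
    have h2 : Tendsto b1 atTop (nhds 0) := by
      have := h1.const_mul α
      rw [mul_zero] at this
      refine this.congr fun t => ?_
      simp only [hb1]
      rw [neg_sub]
    have h3 := h2.eventually (ge_mem_nhds (show (0:ℝ) < c / 8 by positivity))
    obtain ⟨T, hT⟩ := eventually_atTop.1 h3
    exact ⟨max T 0, le_max_right _ _, fun t ht => hT t ((le_max_left _ _).trans ht)⟩
  have hT' : ∀ t ∈ Ici T, 0 ≤ t := fun t ht => hT0.trans ht
  have hxc : ContinuousOn x (Ici T) := fun t ht =>
    (hx1 t (hT' t ht)).continuousAt.continuousWithinAt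
  have hx'c : ContinuousOn x' (Ici T) := fun t ht =>
    (hx2 t (hT' t ht)).continuousAt.continuousWithinAt
  have hbc : ContinuousOn b (Ici T) := fun t ht =>
    (hbd t (hT' t ht)).continuousAt.continuousWithinAt
  have hΦxc : ContinuousOn (fun t => Φ' (x t)) (Ici T) := hΦcont.comp_continuousOn hxc
  have hkint : IntegrableOn (fun t => b t * ‖g t‖) (Ici T) :=
    hgα.mono_set (Ici_subset_Ici.2 hT0)
  have hbγ : ∀ t, 0 ≤ t → b t * (c / (1 + t) ^ α) = c := by
    intro t ht
    have : 0 < (1 + t) ^ α := by positivity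
    simp only [hb]
    field_simp
  -- the Lyapunov function
  have hP : IntegrableOn (fun t => 3 * c / 8 * r * (b t * ‖Φ' (x t)‖)) (Ioi T) := by
    refine hb_lyap T
      (fun t => b t ^ 2 * (Φ (x t) - Φ z)
        + (1 / 2) * ⟪(c / 2 + b1 t) • (x t - z) + b t • x' t, (c / 2 + b1 t) • (x t - z) + b t • x' t⟫
        + (1 / 2) * ((c / 2 + b1 t) * (c / 2 - 2 * b1 t) - b t * b2 t) * ⟪x t - z, x t - z⟫)
      (fun t => 2 * b t * b1 t * (Φ (x t) - Φ z) + b t ^ 2 * ⟪Φ' (x t), x' t⟫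
        + ⟪(c / 2 + b1 t) • (x t - z) + b t • x' t,
            b2 t • (x t - z) + (c / 2 + b1 t) • x' t + b1 t • x' t + b t • x'' t⟫
        + (1 / 2) * (b2 t * (c / 2 - 2 * b1 t) + (c / 2 + b1 t) * (- 2 * b2 t) - b1 t * b2 t
            - b t * b3 t) * ⟪x t - z, x t - z⟫
        + ((c / 2 + b1 t) * (c / 2 - 2 * b1 t) - b t * b2 t) * ⟪x t - z, x' t⟫)
      (fun t => b t * ‖g t‖) _ ?_ ?_ ?_ ?_ hkint ?_ ?_
    · intro t ht
      have ht0 := hT' t ht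
      have d0 := hbd t ht0
      have d1 := hb1d t ht0
      have d2 := hb2d t ht0
      have dx := (hx1 t ht0).sub_const z
      have dv := hx2 t ht0
      have dΦ : HasDerivAt (fun s => Φ (x s)) (⟪Φ' (x t), x' t⟫) t := by
        have h3 := (hΦdiff (x t)).hasFDerivAt.comp_hasDerivAt t (hx1 t ht0)
        rw [InnerProductSpace.toDual_apply_apply] at h3
        exact h3
      have dl := d1.const_add (c / 2)
      have dq := (dl.smul dx).add (d0.smul dv)
      have dξ := (dl.mul ((d1.const_mul 2).const_sub (c / 2))).sub (d0.mul d2)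
      have D := (((d0.pow 2).mul (dΦ.sub_const (Φ z))).add ((dq.inner ℝ dq).const_mul (1 / 2))).add
        ((dξ.const_mul (1 / 2)).mul (dx.inner ℝ dx))
      refine D.congr_deriv ?_
      simp only [Pi.add_apply, Pi.smul_apply', Pi.mul_apply, Pi.sub_apply, Pi.pow_apply]
      have s1 : ⟪b2 t • (x t - z) + (c / 2 + b1 t) • x' t + b1 t • x' t + b t • x'' t,
          (c / 2 + b1 t) • (x t - z) + b t • x' t⟫
          = ⟪(c / 2 + b1 t) • (x t - z) + b t • x' t,
          b2 t • (x t - z) + (c / 2 + b1 t) • x' t + b1 t • x' t + b t • x'' t⟫ :=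
        real_inner_comm _ _
      have s2 : (c / 2 + b1 t) • x' t + b2 t • (x t - z) + (b t • x'' t + b1 t • x' t)
        = b2 t • (x t - z) + (c / 2 + b1 t) • x' t + b1 t • x' t + b t • x'' t := by abel
      rw [s2, s1, real_inner_comm (x t - z) (x' t)]
      push_cast
      ring
    · intro t ht
      have ht0 := hT' t ht
      have h1 := hz (x t)
      have h2 : 0 ≤ (c / 2 + b1 t) * (c / 2 - 2 * b1 t) - b t * b2 t := by
        have := hb1nn t ht0
        have := hT t ht
        have := mul_nonneg (show 0 ≤ c / 2 + b1 t by linarith) (show 0 ≤ c / 2 - 2 * b1 t by linarith)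
        have := mul_nonpos_of_nonneg_of_nonpos (zero_le_one.trans (hb1le t ht0)) (hb2np t ht0)
        linarith
      have h3 : 0 ≤ ⟪x t - z, x t - z⟫ := real_inner_self_nonneg
      have h4 : 0 ≤ ⟪(c / 2 + b1 t) • (x t - z) + b t • x' t, (c / 2 + b1 t) • (x t - z) + b t • x' t⟫ :=
        real_inner_self_nonneg
      have h5 : 0 ≤ b t ^ 2 * (Φ (x t) - Φ z) := mul_nonneg (sq_nonneg _) (by linarith)
      have h6 := mul_nonneg h2 h3
      linarith
    · intro t ht
      have := hb1le t (hT' t ht)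
      positivity
    · intro t ht
      have := hb1le t (hT' t ht)
      positivity
    · exact (hbc.mul hΦxc.norm).const_mul _ 
    · intro t ht
      have ht0 := hT' t ht
      have hbp : 0 < b t := zero_lt_one.trans_le (hb1le t ht0)
      refine (hb_alg (x t - z) (x' t) (Φ' (x t)) (g t) (x'' t) c (b t) (b1 t) (b2 t) (b3 t)
        (c / (1 + t) ^ α) r (Φ (x t) - Φ z) hc hbp (hb1nn t ht0)
        (hT t ht) (hb2np t ht0) (hb3nn t ht0) (hbγ t ht0) (hode t ht0) hr.le (hzr _)
        (hb_grad Φ Φ' hΦconv hΦdiff _ _)).trans ?_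
      gcongr
      apply Real.le_sqrt_of_sq_le
      rw [← real_inner_self_eq_norm_sq]
      have h1 := hz (x t)
      have h2 : 0 ≤ (c / 2 + b1 t) * (c / 2 - 2 * b1 t) - b t * b2 t := by
        have := hb1nn t ht0
        have := hT t ht
        have := mul_nonneg (show 0 ≤ c / 2 + b1 t by linarith) (show 0 ≤ c / 2 - 2 * b1 t by linarith)
        have := mul_nonpos_of_nonneg_of_nonpos hbp.le (hb2np t ht0)
        linarith
      have h3 : 0 ≤ ⟪x t - z, x t - z⟫ := real_inner_self_nonneg
      have h5 : 0 ≤ b t ^ 2 * (Φ (x t) - Φ z) := mul_nonneg (sq_nonneg _) (by linarith)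
      have h6 := mul_nonneg h2 h3
      linarith
  have hG : IntegrableOn (fun t => b t * ‖Φ' (x t)‖) (Ioi T) := by
    have h0 : 3 * c / 8 * r ≠ 0 := by positivity
    have := hP.const_mul (3 * c / 8 * r)⁻¹
    refine this.congr (ae_of_all _ fun t => ?_)
    dsimp only
    rw [inv_mul_cancel_left₀ h0]
  have hGI : IntegrableOn (fun t => b t * ‖Φ' (x t)‖) (Ici T) :=
    (integrableOn_Ici_iff_integrableOn_Ioi).2 hG
  -- integrability of the speed
  have hv : IntegrableOn (fun t => ‖x' t‖) (Ioi T) := by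
    refine hb_speed T (c / 2) (by positivity) (fun t => ‖b t • x' t‖)
      (fun t => ⟪b t • x' t, b t • x'' t + b1 t • x' t⟫) _
      (fun t => b t * ‖g t‖ + b t * ‖Φ' (x t)‖) ?_ ?_ ?_ ?_ ?_ (hkint.add hGI) hx'c.norm ?_
    · intro t ht; positivity
    · intro t ht
      have ht0 := hT' t ht
      have d := (hbd t ht0).smul (hx2 t ht0)
      have D := d.inner ℝ d
      have e : (fun s => ‖b s • x' s‖ ^ 2) = fun s => ⟪b s • x' s, b s • x' s⟫ := by
        funext s; rw [real_inner_self_eq_norm_sq]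
      rw [e]
      refine D.congr_deriv ?_
      simp only [Pi.smul_apply']
      rw [real_inner_comm (b t • x' t) (b t • x'' t + b1 t • x' t)]
      ring
    · intro t ht
      have := hb1le t (hT' t ht)
      positivity
    · intro t ht; positivity
    · intro t ht
      have h1 := hb1le t (hT' t ht)
      rw [norm_smul, Real.norm_of_nonneg (by linarith)]
      exact le_mul_of_one_le_left (norm_nonneg _) h1
    · intro t ht
      have ht0 := hT' t ht
      have h1 := hb1le t ht0
      have hbp : 0 < b t := by linarith
      have h2 := hT t ht
      have hba : b t • x'' t + b1 t • x' t = b t • g t - b t • Φ' (x t) - (c - b1 t) • x' t := by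
        have e : b t • (c / (1 + t) ^ α) • x' t = c • x' t := by rw [smul_smul, hbγ t ht0]
        rw [← hode t ht0, smul_add, smul_add, e]
        module
      have i1 := real_inner_le_norm (b t • x' t) (b t • g t)
      have i2 := real_inner_le_norm (b t • x' t) (-(b t • Φ' (x t)))
      rw [hba, inner_sub_right, sub_eq_add_neg (b t • g t), inner_add_right]
      rw [norm_neg, norm_smul (b t) (Φ' (x t)), Real.norm_of_nonneg hbp.le] at i2
      rw [norm_smul (b t) (g t), Real.norm_of_nonneg hbp.le] at i1
      have i3 : c / 2 * ‖x' t‖ * ‖b t • x' t‖ ≤ ⟪b t • x' t, (c - b1 t) • x' t⟫ := by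
        rw [inner_smul_left, inner_smul_right, real_inner_self_eq_norm_sq, norm_smul,
          Real.norm_of_nonneg hbp.le]
        have : 0 ≤ b t * ‖x' t‖ ^ 2 := by positivity
        simp only [conj_trivial]
        nlinarith
      linarith
  have hv' : IntegrableOn x' (Ioi T) :=
    (integrable_norm_iff ((hx'c.mono Ioi_subset_Ici_self).aestronglyMeasurable measurableSet_Ioi)).1 hv
  have hlim := tendsto_limUnder_of_hasDerivAt_of_integrableOn_Ioi
    (fun t ht => hx1 t (hT' t (Ioi_subset_Ici_self ht))) hv'
  refine ⟨_, ?_, hlim⟩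
  set L := limUnder atTop x
  have hGn : IntegrableOn (fun t => Φ' (x t)) (Ioi T) := by
    refine Integrable.mono' hG
      ((hΦxc.mono Ioi_subset_Ici_self).aestronglyMeasurable measurableSet_Ioi) ?_
    refine (ae_restrict_iff' measurableSet_Ioi).2 (ae_of_all _ fun t ht => ?_)
    exact le_mul_of_one_le_left (norm_nonneg _) (hb1le t (hT' t (Ioi_subset_Ici_self ht)))
  have hL : Φ' L = 0 := by
    refine IntegrableAtFilter.eq_zero_of_tendsto (μ := volume) (l := atTop)
      ⟨Ioi T, Ioi_mem_atTop _, hGn⟩ ?_ ((hΦcont.tendsto L).comp hlim)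
    intro s hs
    rcases mem_atTop_sets.1 hs with ⟨b, hb⟩
    rw [← top_le_iff, ← Real.volume_Ici (a := b)]
    exact measure_mono hb
  intro u
  have := hb_grad Φ Φ' hΦconv hΦdiff L u
  rw [hL, inner_zero_left] at this
  linarith
end
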